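/- For every transfer Petri net N = (P, T, M₀) whose initial marking M₀ places a single token in one place and no tokens elsewhere, and for every marking M_f of N, there exists a register set automaton A over the unary alphabet Σ = {a} such that M_f is coverable in N if and only if L(A) ≠ ∅. -/

import Mathlib

/-- A data word over alphabet `Sigma`, with data domain `𝔻 = ℕ`. -/
abbrev DataWord (Sigma : Type) : Type :=
  List (Sigma × ℕ)
/-- A transition `(src, letter, gIn, gNin, upd, tgt)` of a register set automaton.
In the update, `none` stands for the current input value `in`, and `some r`
for register `r`. -/
structure RsATrans (Sigma : Type) where
  src : ℕ
  letter : Sigma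
  gIn : Finset ℕ
  gNin : Finset ℕ
  upd : ℕ → Finset (Option ℕ)
  tgt : ℕ

/-- The register assignment obtained after taking transition `t` with current input
data value `d`, starting from the assignment `f`: each register gets the union of
the contents of the registers in its update set, together with `{d}` if the update
set contains `in`. -/
def RsATrans.apply {Sigma : Type} (t : RsATrans Sigma) (f : ℕ → Finset ℕ) (d : ℕ) :
    ℕ → Finset ℕ := fun r =>
  (t.upd r).biUnion fun o =>
    match o with
    | none => {d}
    | some r' => f r'

/-- A register set automaton (RsA); states and registers are drawn from `ℕ`. -/
structure RsA (Sigma : Type) where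
  Q : Finset ℕ
  R : Finset ℕ
  Δ : Set (RsATrans Sigma)
  I : Finset ℕ
  F : Finset ℕ
  finite_trans : Δ.Finite
  I_sub : I ⊆ Q
  F_sub : F ⊆ Q
  wf : ∀ t ∈ Δ, t.src ∈ Q ∧ t.tgt ∈ Q ∧ t.gIn ⊆ R ∧ t.gNin ⊆ R ∧
    Disjoint t.gIn t.gNin ∧ ∀ r ∈ R, ∀ r' : ℕ, some r' ∈ t.upd r → r' ∈ R

/-- One step of an RsA from configuration `c` to configuration `c'`, reading
the letter `x`. -/
def RsA.Step {Sigma : Type} (A : RsA Sigma) (c : ℕ × (ℕ → Finset ℕ)) (x : Sigma × ℕ)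
    (c' : ℕ × (ℕ → Finset ℕ)) : Prop :=
  ∃ t ∈ A.Δ, t.src = c.1 ∧ t.letter = x.1 ∧
    (∀ r ∈ t.gIn, x.2 ∈ c.2 r) ∧ (∀ r ∈ t.gNin, x.2 ∉ c.2 r) ∧
    c' = (t.tgt, t.apply c.2 x.2)

/-- `A.Run c w c'` holds iff `A` can read the data word `w` going from
configuration `c` to configuration `c'`. -/
inductive RsA.Run {Sigma : Type} (A : RsA Sigma) :
    (ℕ × (ℕ → Finset ℕ)) → DataWord Sigma → (ℕ × (ℕ → Finset ℕ)) → Prop where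
  | nil (c : ℕ × (ℕ → Finset ℕ)) : RsA.Run A c [] c
  | cons {c c' c'' : ℕ × (ℕ → Finset ℕ)} {x : Sigma × ℕ} {w : DataWord Sigma} :
      A.Step c x c' → RsA.Run A c' w c'' → RsA.Run A c (x :: w) c''

/-- The language of an RsA: words on which there exists an accepting run
starting from some initial state with all registers empty. -/
def RsA.Lang {Sigma : Type} (A : RsA Sigma) : Set (DataWord Sigma) :=
  { w | ∃ q₀ ∈ A.I, ∃ c : ℕ × (ℕ → Finset ℕ),
      A.Run (q₀, fun _ => ∅) w c ∧ c.1 ∈ A.F }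
/-- A transition of a transfer Petri net: input and output multiplicities and
the transfer function. Places are drawn from `ℕ`. -/
structure TPNTrans where
  inp : ℕ → ℕ
  out : ℕ → ℕ
  transfer : ℕ → ℕ

/-- A transfer Petri net (TPN); places are drawn from `ℕ`, markings are functions
`ℕ → ℕ` (only the values on `P` matter). -/
structure TPN where
  P : Finset ℕ
  T : Set TPNTrans
  M0 : ℕ → ℕ
  finite_T : T.Finite
  wf : ∀ t ∈ T, ∀ p ∈ P, t.transfer p ∈ P

/-- A TPN transition is enabled in a marking iff every place holds enough tokens. -/
def TPN.Enabled (N : TPN) (t : TPNTrans) (M : ℕ → ℕ) : Prop :=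
  ∀ p ∈ N.P, t.inp p ≤ M p

/-- Firing a TPN transition: remove the input tokens, transfer the remaining tokens
along the transfer function, and add the output tokens. -/
def TPN.fire (N : TPN) (t : TPNTrans) (M : ℕ → ℕ) : ℕ → ℕ := fun p =>
  t.out p + ∑ p' ∈ N.P.filter (fun p' => t.transfer p' = p), (M p' - t.inp p')

/-- The reachable markings of a TPN. -/
inductive TPN.Reachable (N : TPN) : (ℕ → ℕ) → Prop where
  | init : TPN.Reachable N N.M0
  | step {M : ℕ → ℕ} {t : TPNTrans} : TPN.Reachable N M → t ∈ N.T →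
      N.Enabled t M → TPN.Reachable N (N.fire t M)

/-- A marking `M` is coverable iff some reachable marking dominates it on all places. -/
def TPN.Coverable (N : TPN) (M : ℕ → ℕ) : Prop :=
  ∃ M', N.Reachable M' ∧ ∀ p ∈ N.P, M p ≤ M' p

/-!
Tokens of the net are data values, and each place `p` has a register `current p` holding the
tokens of `p`. A register automaton cannot delete a single value from a register, so a consumed
token is instead recorded in a register `used`: the tokens of `p` that still count are those of
`current p` outside `used`. A net transition is simulated token by token: its inputs are consumed,
its outputs are put as values into registers `next p`, and any number of the other tokens are
moved to their transfer targets; then `next` replaces `current`, and `used` is emptied. Tokens that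
have not been moved are lost at that point, and a value present in several registers is consumed
from all of them at once. Both effects only decrease the marking, which is harmless for
coverability; when produced values are fresh and all tokens are moved, nothing is lost.
-/

namespace RsA

variable {Sigma : Type} {A : RsA Sigma}

/-- Reachability between configurations of an RsA, with the word read left implicit. -/
def Reaches (A : RsA Sigma) : ℕ × (ℕ → Finset ℕ) → ℕ × (ℕ → Finset ℕ) → Prop :=
  Relation.ReflTransGen fun c c' => ∃ x, A.Step c x c'

theorem reaches_iff_exists_run {c c' : ℕ × (ℕ → Finset ℕ)} :
    A.Reaches c c' ↔ ∃ w, A.Run c w c' := by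
  constructor
  · intro h
    induction h using Relation.ReflTransGen.head_induction_on with
    | refl => exact ⟨[], .nil _⟩
    | head hstep _ ih =>
      obtain ⟨x, hstep⟩ := hstep
      obtain ⟨w, hrun⟩ := ih
      exact ⟨x :: w, .cons hstep hrun⟩
  · rintro ⟨w, h⟩
    induction h with
    | nil => exact .refl
    | cons hstep _ ih => exact .head ⟨_, hstep⟩ ih

theorem lang_ne_empty_iff :
    A.Lang ≠ ∅ ↔ ∃ q₀ ∈ A.I, ∃ q ∈ A.F, ∃ f, A.Reaches (q₀, fun _ => ∅) (q, f) := by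
  simp only [← Set.nonempty_iff_ne_empty, reaches_iff_exists_run]
  constructor
  · rintro ⟨w, q₀, hq₀, ⟨q, f⟩, hrun, hq⟩
    exact ⟨q₀, hq₀, q, hq, f, w, hrun⟩
  · rintro ⟨q₀, hq₀, q, hq, f, w, hrun⟩
    exact ⟨w, q₀, hq₀, (q, f), hrun, hq⟩

end RsA

namespace TPN

/-- The control states of the phases of a coverability test. -/
inductive Phase
  | start
  | ready
  | accept
deriving Encodable

/-- A net transition that also changes the control state. -/
structure ControlledTrans extends TPNTrans where
  src : Phase
  tgt : Phase

/-- `N.ControlReachable G q M`: the transitions `G`, fired on the places of `N`, lead from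
the state `start` and the empty marking to the state `q` and the marking `M`. -/
inductive ControlReachable {ι : Type} (N : TPN) (G : ι → ControlledTrans) :
    Phase → (ℕ → ℕ) → Prop
  | start : ControlReachable N G .start fun _ => 0
  | fire {M : ℕ → ℕ} (i : ι) : ControlReachable N G (G i).src M →
      N.Enabled (G i).toTPNTrans M →
      ControlReachable N G (G i).tgt (N.fire (G i).toTPNTrans M)

/-- The controlled transitions testing whether `Mf` is coverable: `none` produces the initial
marking, `some none` consumes `Mf`, and `some (some t)` fires the transition `t` of `N`. -/
def coverTest (N : TPN) (Mf : ℕ → ℕ) : Option (Option N.T) → ControlledTrans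
  | none => ⟨⟨fun _ => 0, N.M0, id⟩, .start, .ready⟩
  | some none => ⟨⟨Mf, fun _ => 0, id⟩, .ready, .accept⟩
  | some (some t) => ⟨t, .ready, .ready⟩

variable {N : TPN} {Mf M : ℕ → ℕ}

theorem fire_zero_eq_out (t : TPNTrans) : N.fire t (fun _ => 0) = t.out := by
  funext p
  simp [fire]

theorem Reachable.controlReachable (h : N.Reachable M) :
    N.ControlReachable (N.coverTest Mf) .ready M := by
  induction h with
  | init =>
    have h : N.ControlReachable (N.coverTest Mf) .ready (N.fire _ fun _ => 0) :=
      .fire none .start fun _ _ => le_rfl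
    rwa [fire_zero_eq_out] at h
  | @step _ t _ ht henabled ih =>
    exact .fire (G := N.coverTest Mf) (some (some ⟨t, ht⟩)) ih henabled

/-- What the reachability of a control state with a marking says about `N`. -/
def PhaseMeaning (N : TPN) (Mf : ℕ → ℕ) : Phase → (ℕ → ℕ) → Prop
  | .start, M => M = fun _ => 0
  | .ready, M => N.Reachable M
  | .accept, _ => N.Coverable Mf

theorem ControlReachable.phaseMeaning {q : Phase}
    (h : N.ControlReachable (N.coverTest Mf) q M) : N.PhaseMeaning Mf q M := by
  induction h with
  | start => exact rfl
  | @fire M i _ henabled ih =>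
    match i with
    | none =>
      obtain rfl : M = fun _ => 0 := ih
      rw [fire_zero_eq_out]
      exact Reachable.init
    | some none => exact ⟨M, ih, henabled⟩
    | some (some t) => exact Reachable.step ih t.2 henabled

theorem coverable_iff_controlReachable :
    N.Coverable Mf ↔ ∃ M, N.ControlReachable (N.coverTest Mf) .accept M :=
  ⟨fun ⟨_, hreach, hcover⟩ => ⟨_, .fire (some none) hreach.controlReachable hcover⟩,
    fun ⟨_, h⟩ => h.phaseMeaning⟩

end TPN

namespace RegisterSimulation

open TPN (ControlledTrans Phase)

/-- A micro-step `(a, b)` consumes a token of the place `a` and produces one in the place `b`,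
where `none` means that nothing is consumed or produced. -/
abbrev TokenOp : Type := Option ℕ × Option ℕ

/-- The number of tokens of `p` consumed by a list of micro-steps. -/
def takes (l : List TokenOp) (p : ℕ) : ℕ := l.countP fun a => a.1 = some p

/-- The number of tokens produced in `p` by a list of micro-steps. -/
def puts (l : List TokenOp) (p : ℕ) : ℕ := l.countP fun a => a.2 = some p

/-- The micro-steps that consume the inputs and produce the outputs of `t`. -/
noncomputable def tokenOps (P : Finset ℕ) (t : TPNTrans) : List TokenOp :=
  P.toList.flatMap fun p =>
    List.replicate (t.inp p) (some p, none) ++ List.replicate (t.out p) (none, some p)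

theorem takes_cons (a : TokenOp) (l : List TokenOp) (p : ℕ) :
    takes (a :: l) p = takes l p + if a.1 = some p then 1 else 0 := by
  simp [takes, List.countP_cons]

theorem puts_cons (a : TokenOp) (l : List TokenOp) (p : ℕ) :
    puts (a :: l) p = puts l p + if a.2 = some p then 1 else 0 := by
  simp [puts, List.countP_cons]

theorem takes_tokenOps {P : Finset ℕ} (t : TPNTrans) {p : ℕ} (hp : p ∈ P) :
    takes (tokenOps P t) p = t.inp p := by
  simp [takes, tokenOps, List.countP_flatMap, Function.comp_def, List.countP_replicate,
    Finset.sum_map_toList, hp]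

theorem puts_tokenOps {P : Finset ℕ} (t : TPNTrans) {p : ℕ} (hp : p ∈ P) :
    puts (tokenOps P t) p = t.out p := by
  simp [puts, tokenOps, List.countP_flatMap, Function.comp_def, List.countP_replicate,
    Finset.sum_map_toList, hp]

theorem take_mem_of_mem_tokenOps {P : Finset ℕ} {t : TPNTrans} {a : TokenOp}
    (ha : a ∈ tokenOps P t) {p : ℕ} (hp : a.1 = some p) : p ∈ P := by
  simp only [tokenOps, List.mem_flatMap, Finset.mem_toList, List.mem_append,
    List.mem_replicate] at ha
  obtain ⟨q, hq, ⟨-, rfl⟩ | ⟨-, rfl⟩⟩ := ha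
  · exact Option.some.inj hp ▸ hq
  · simp at hp

/-- The registers of the simulating automaton. -/
inductive Register
  | used
  | current (p : ℕ)
  | next (p : ℕ)
deriving Encodable

/-- The number of the register `used`, holding the tokens already consumed or produced. -/
abbrev used : ℕ := Encodable.encode Register.used

/-- The number of the register holding the tokens of `p` before a net transition. -/
abbrev current (p : ℕ) : ℕ := Encodable.encode (Register.current p)

/-- The number of the register holding the tokens of `p` after a net transition. -/
abbrev next (p : ℕ) : ℕ := Encodable.encode (Register.next p)

/-- The automaton transition performing a micro-step. A produced token is also marked as used,
so that it is fresh and no later micro-step puts it into a second register `next q`. -/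
def tokenTrans (s s' : ℕ) (a : TokenOp) : RsATrans Unit where
  src := s
  letter := ()
  gIn := (a.1.map current).toFinset
  gNin := {used}
  upd r := if r = used ∨ a.2.map next = some r then {some r, none} else {some r}
  tgt := s'

/-- The automaton transition that only changes the state. -/
def enterTrans (s s' : ℕ) : RsATrans Unit where
  src := s
  letter := ()
  gIn := ∅
  gNin := ∅
  upd r := {some r}
  tgt := s'

/-- The automaton transition that completes a net transition: `next` replaces `current`, and
all other registers are emptied. -/
def leaveTrans (s s' : ℕ) : RsATrans Unit where
  src := s
  letter := ()
  gIn := ∅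
  gNin := ∅
  upd r := match Encodable.decode r with
    | some (Register.current p) => {some (next p)}
    | _ => ∅
  tgt := s'

/-- The tokens of `p` not consumed so far. -/
def live (f : ℕ → Finset ℕ) (p : ℕ) : Finset ℕ := f (current p) \ f used

section Updates

variable (s s' : ℕ) (a : TokenOp) (f : ℕ → Finset ℕ) (d p : ℕ)

theorem tokenTrans_apply_used :
    (tokenTrans s s' a).apply f d used = insert d (f used) := by
  ext x
  simp [RsATrans.apply, tokenTrans]

theorem tokenTrans_apply_current :
    (tokenTrans s s' a).apply f d (current p) = f (current p) := by
  ext x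
  simp [RsATrans.apply, tokenTrans]

theorem tokenTrans_apply_next :
    (tokenTrans s s' a).apply f d (next p) =
      if a.2 = some p then insert d (f (next p)) else f (next p) := by
  split_ifs with h <;> ext x <;> simp [RsATrans.apply, tokenTrans, h]

theorem live_tokenTrans :
    live ((tokenTrans s s' a).apply f d) p = (live f p).erase d := by
  rw [live, tokenTrans_apply_current, tokenTrans_apply_used, Finset.sdiff_insert, live]

theorem enterTrans_apply : (enterTrans s s').apply f d = f := by
  funext r
  simp [RsATrans.apply, enterTrans]

theorem leaveTrans_apply_used : (leaveTrans s s').apply f d used = ∅ := by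
  simp [RsATrans.apply, leaveTrans]

theorem leaveTrans_apply_current :
    (leaveTrans s s').apply f d (current p) = f (next p) := by
  simp [RsATrans.apply, leaveTrans]

theorem leaveTrans_apply_next : (leaveTrans s s').apply f d (next p) = ∅ := by
  simp [RsATrans.apply, leaveTrans]

theorem live_leaveTrans : live ((leaveTrans s s').apply f d) p = f (next p) := by
  rw [live, leaveTrans_apply_current, leaveTrans_apply_used, Finset.sdiff_empty]

end Updates

/-- The states of the simulating automaton: the control states of the simulated net, and, for
each of its transitions, the lists of micro-steps still to be performed. -/
inductive State (ι : Type)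
  | control (q : Phase)
  | executing (i : ι) (l : List TokenOp)
deriving Encodable

variable {ι : Type} [Encodable ι]

/-- The number of a control state. -/
abbrev control (ι : Type) [Encodable ι] (q : Phase) : ℕ :=
  Encodable.encode (State.control q : State ι)

/-- The number of the state in which `i` is executed with the micro-steps `l` remaining. -/
abbrev executing (i : ι) (l : List TokenOp) : ℕ := Encodable.encode (State.executing i l)

/-- The transitions of the simulating automaton. -/
inductive SimTrans (P : Finset ℕ) (G : ι → ControlledTrans) : RsATrans Unit → Prop
  | enter (i : ι) : SimTrans P G
      (enterTrans (control ι (G i).src) (executing i (tokenOps P (G i).toTPNTrans)))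
  | op (i : ι) (a : TokenOp) (l : List TokenOp) (h : a :: l <:+ tokenOps P (G i).toTPNTrans) :
      SimTrans P G (tokenTrans (executing i (a :: l)) (executing i l) a)
  | move (i : ι) (p : ℕ) (hp : p ∈ P) : SimTrans P G
      (tokenTrans (executing i []) (executing i []) (some p, some ((G i).transfer p)))
  | leave (i : ι) : SimTrans P G (leaveTrans (executing i []) (control ι (G i).tgt))

theorem finite_setOf_simTrans [Finite ι] (P : Finset ℕ) (G : ι → ControlledTrans) :
    {t | SimTrans P G t}.Finite := by
  let enter (i : ι) := enterTrans (control ι (G i).src) (executing i (tokenOps P (G i).toTPNTrans))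
  let leave (i : ι) := leaveTrans (executing i []) (control ι (G i).tgt)
  let move (i : ι) (p : ℕ) :=
    tokenTrans (executing i []) (executing i []) (some p, some ((G i).transfer p))
  let op (i : ι) (l : List TokenOp) := tokenTrans (executing i l) (executing i l.tail) l.headI
  have hfinite : (⋃ i, {enter i, leave i} ∪ move i '' P ∪
      op i '' {l | l ∈ (tokenOps P (G i).toTPNTrans).tails}).Finite :=
    Set.finite_iUnion fun i => ((Set.toFinite _).union (P.finite_toSet.image _)).union
      ((List.finite_toSet _).image _)
  refine hfinite.subset fun t ht => Set.mem_iUnion.2 ?_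
  cases ht with
  | enter i => exact ⟨i, .inl (.inl (.inl rfl))⟩
  | op i a l h => exact ⟨i, .inr ⟨a :: l, (List.mem_tails ..).2 h, rfl⟩⟩
  | move i p hp => exact ⟨i, .inl (.inr ⟨p, hp, rfl⟩)⟩
  | leave i => exact ⟨i, .inl (.inl (.inr rfl))⟩

/-- The registers used by the simulation of a net with places `P`. -/
def registers (P : Finset ℕ) : Finset ℕ := insert used (P.image current ∪ P.image next)

theorem SimTrans.guards_subset {P : Finset ℕ} {G : ι → ControlledTrans} {t : RsATrans Unit}
    (ht : SimTrans P G t) : t.gIn ⊆ registers P ∧ t.gNin ⊆ registers P := by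
  cases ht with
  | enter i => simp [enterTrans]
  | op i a l h =>
    have htake {p : ℕ} : a.1 = some p → p ∈ P :=
      take_mem_of_mem_tokenOps (h.subset List.mem_cons_self)
    constructor
    · intro r hr
      obtain ⟨p, hp, rfl⟩ : ∃ p, a.1 = some p ∧ current p = r := by simpa [tokenTrans] using hr
      simp [registers, htake hp]
    · simp [tokenTrans, registers]
  | move i p hp => simp [tokenTrans, registers, hp]
  | leave i => simp [leaveTrans]

theorem SimTrans.disjoint_guards {P : Finset ℕ} {G : ι → ControlledTrans} {t : RsATrans Unit}
    (ht : SimTrans P G t) : Disjoint t.gIn t.gNin := by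
  cases ht <;> simp [enterTrans, tokenTrans, leaveTrans]

theorem SimTrans.upd_mem {P : Finset ℕ} {G : ι → ControlledTrans} {t : RsATrans Unit}
    (ht : SimTrans P G t) {r r' : ℕ} (hr : r ∈ registers P) (hr' : some r' ∈ t.upd r) :
    r' ∈ registers P := by
  have htoken {s s' : ℕ} {a : TokenOp} (h : some r' ∈ (tokenTrans s s' a).upd r) : r' = r := by
    simp only [tokenTrans] at h
    split_ifs at h <;> simpa using h
  cases ht with
  | enter i =>
    obtain rfl : r' = r := by simpa [enterTrans] using hr'
    exact hr
  | op i a l h => exact htoken hr' ▸ hr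
  | move i p _ => exact htoken hr' ▸ hr
  | leave i =>
    simp only [registers, Finset.mem_insert, Finset.mem_union, Finset.mem_image] at hr
    obtain rfl | ⟨p, hp, rfl⟩ | ⟨p, -, rfl⟩ := hr
    · simp [leaveTrans] at hr'
    · obtain rfl : r' = next p := by simpa [leaveTrans] using hr'
      simp [registers, hp]
    · simp [leaveTrans] at hr'

/-- The register set automaton simulating the controlled net transitions `G` on the places `P`. -/
noncomputable def simulator [Finite ι] (P : Finset ℕ) (G : ι → ControlledTrans) : RsA Unit where
  Q := {control ι .start, control ι .accept} ∪
    ((finite_setOf_simTrans P G).toFinset.image RsATrans.src ∪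
      (finite_setOf_simTrans P G).toFinset.image RsATrans.tgt)
  R := registers P
  Δ := {t | SimTrans P G t}
  I := {control ι .start}
  F := {control ι .accept}
  finite_trans := finite_setOf_simTrans P G
  I_sub := by simp
  F_sub := by simp
  wf t ht := by
    have hsrc : t.src ∈ (finite_setOf_simTrans P G).toFinset.image RsATrans.src :=
      Finset.mem_image_of_mem _ ((Set.Finite.mem_toFinset _).2 ht)
    have htgt : t.tgt ∈ (finite_setOf_simTrans P G).toFinset.image RsATrans.tgt :=
      Finset.mem_image_of_mem _ ((Set.Finite.mem_toFinset _).2 ht)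
    exact ⟨Finset.mem_union_right _ (Finset.mem_union_left _ hsrc),
      Finset.mem_union_right _ (Finset.mem_union_right _ htgt),
      ht.guards_subset.1, ht.guards_subset.2, ht.disjoint_guards,
      fun _ hr _ hr' => ht.upd_mem hr hr'⟩

theorem sum_filter_take {P : Finset ℕ} (δ : ℕ → ℕ) {q : ℕ} (hq : q ∈ P) (p : ℕ) :
    ∑ p' ∈ P with δ p' = p, (if some q = some p' then 1 else 0) =
      if some (δ q) = some p then 1 else 0 := by
  simp [hq]

/-! ### Runs of the automaton are lossy runs of the net -/

section Soundness

variable {N : TPN} {G : ι → ControlledTrans} {f : ℕ → Finset ℕ} {M : ℕ → ℕ}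

/-- Between net transitions, the registers hold at most the tokens of `M`. -/
def Bounded (P : Finset ℕ) (f : ℕ → Finset ℕ) (M : ℕ → ℕ) : Prop :=
  ∀ p ∈ P, (live f p).card ≤ M p ∧ f (next p) = ∅

/-- The registers hold at most what is left of the marking `M` when `t` is being fired and the
micro-steps `l` remain. In `output_le`, each live token counts as if it were already moved, so
that moving a token changes neither side; `t.inp q` is added to the left rather than subtracted
from `M q`, since `t` is only known to be enabled once `l` is empty. -/
structure PartlyFired (P : Finset ℕ) (t : TPNTrans) (l : List TokenOp) (M : ℕ → ℕ)
    (f : ℕ → Finset ℕ) : Prop where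
  live_le : ∀ p ∈ P, (live f p).card + t.inp p ≤ M p + takes l p
  output_le : ∀ p ∈ P,
    (f (next p)).card + puts l p + ∑ q ∈ P with t.transfer q = p, ((live f q).card + t.inp q) ≤
      t.out p + ∑ q ∈ P with t.transfer q = p, (M q + takes l q)

theorem card_live_tokenTrans_le {s s' : ℕ} {a : TokenOp} {d : ℕ}
    (hin : ∀ r ∈ (tokenTrans s s' a).gIn, d ∈ f r)
    (hnin : ∀ r ∈ (tokenTrans s s' a).gNin, d ∉ f r) (p : ℕ) :
    (live ((tokenTrans s s' a).apply f d) p).card + (if a.1 = some p then 1 else 0) ≤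
      (live f p).card := by
  rw [live_tokenTrans]
  split_ifs with h
  · have hd : d ∈ live f p :=
      Finset.mem_sdiff.2 ⟨hin _ (by simp [tokenTrans, h]), hnin _ (by simp [tokenTrans])⟩
    exact (Finset.card_erase_add_one hd).le
  · exact Finset.card_erase_le

theorem card_next_tokenTrans_le (s s' : ℕ) (a : TokenOp) (f : ℕ → Finset ℕ) (d p : ℕ) :
    ((tokenTrans s s' a).apply f d (next p)).card ≤
      (f (next p)).card + if a.2 = some p then 1 else 0 := by
  rw [tokenTrans_apply_next]
  split_ifs
  · exact Finset.card_insert_le _ _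
  · exact le_rfl

theorem Bounded.partlyFired {P : Finset ℕ} (h : Bounded P f M) (t : TPNTrans) :
    PartlyFired P t (tokenOps P t) M f where
  live_le p hp := by
    rw [takes_tokenOps t hp]
    exact Nat.add_le_add_right (h p hp).1 _
  output_le p hp := by
    rw [(h p hp).2, puts_tokenOps t hp, Finset.card_empty, zero_add]
    gcongr with q hq
    · exact (h q (Finset.mem_filter.1 hq).1).1
    · exact (takes_tokenOps t (Finset.mem_filter.1 hq).1).ge

theorem PartlyFired.op {P : Finset ℕ} {t : TPNTrans} {a : TokenOp} {l : List TokenOp}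
    {f' : ℕ → Finset ℕ} (h : PartlyFired P t (a :: l) M f)
    (hlive : ∀ p, (live f' p).card + (if a.1 = some p then 1 else 0) ≤ (live f p).card)
    (hnext : ∀ p, (f' (next p)).card ≤ (f (next p)).card + if a.2 = some p then 1 else 0) :
    PartlyFired P t l M f' where
  live_le p hp := by
    have := h.live_le p hp
    rw [takes_cons] at this
    linarith [hlive p]
  output_le p hp := by
    have hout := h.output_le p hp
    have hsum : ∑ q ∈ P with t.transfer q = p,
        ((live f' q).card + t.inp q + if a.1 = some q then 1 else 0) ≤
        ∑ q ∈ P with t.transfer q = p, ((live f q).card + t.inp q) :=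
      Finset.sum_le_sum fun q _ => by linarith [hlive q]
    rw [Finset.sum_add_distrib] at hsum
    simp only [takes_cons, puts_cons, ← add_assoc, Finset.sum_add_distrib (g := fun q =>
      if a.1 = some q then 1 else 0)] at hout
    linarith [hnext p]

theorem PartlyFired.move {P : Finset ℕ} {t : TPNTrans} {l : List TokenOp} {q : ℕ}
    {f' : ℕ → Finset ℕ} (h : PartlyFired P t l M f) (hq : q ∈ P)
    (hlive : ∀ p, (live f' p).card + (if some q = some p then 1 else 0) ≤ (live f p).card)
    (hnext : ∀ p, (f' (next p)).card ≤
      (f (next p)).card + if some (t.transfer q) = some p then 1 else 0) :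
    PartlyFired P t l M f' where
  live_le p hp := by linarith [h.live_le p hp, le_of_add_le_left (hlive p)]
  output_le p hp := by
    have hsum : ∑ q' ∈ P with t.transfer q' = p,
        ((live f' q').card + t.inp q' + if some q = some q' then 1 else 0) ≤
        ∑ q' ∈ P with t.transfer q' = p, ((live f q').card + t.inp q') :=
      Finset.sum_le_sum fun q' _ => by linarith [hlive q']
    rw [Finset.sum_add_distrib, sum_filter_take _ hq] at hsum
    linarith [h.output_le p hp, hnext p]

theorem PartlyFired.enabled {t : TPNTrans} (h : PartlyFired N.P t [] M f) : N.Enabled t M :=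
  fun p hp => le_of_add_le_right (h.live_le p hp)

theorem PartlyFired.leave {t : TPNTrans} (h : PartlyFired N.P t [] M f) (s s' d : ℕ) :
    Bounded N.P ((leaveTrans s s').apply f d) (N.fire t M) := by
  intro p hp
  have hsum : ∑ q ∈ N.P with t.transfer q = p, (M q - t.inp q) +
      ∑ q ∈ N.P with t.transfer q = p, t.inp q = ∑ q ∈ N.P with t.transfer q = p, M q := by
    rw [← Finset.sum_add_distrib]
    exact Finset.sum_congr rfl fun q hq =>
      Nat.sub_add_cancel (h.enabled q (Finset.mem_filter.1 hq).1)
  have hout := h.output_le p hp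
  simp only [takes, puts, List.countP_nil, add_zero, Finset.sum_add_distrib] at hout
  rw [live_leaveTrans, leaveTrans_apply_next, TPN.fire]
  exact ⟨by lia, rfl⟩

/-- The invariant of the runs of the simulating automaton. -/
def RunInvariant (N : TPN) (G : ι → ControlledTrans) : State ι → (ℕ → Finset ℕ) → Prop
  | .control q, f => ∃ M, N.ControlReachable G q M ∧ Bounded N.P f M
  | .executing i l, f => ∃ M, N.ControlReachable G (G i).src M ∧
      PartlyFired N.P (G i).toTPNTrans l M f

theorem SimTrans.runInvariant {t : RsATrans Unit} {d : ℕ} {s : State ι}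
    (ht : SimTrans N.P G t) (hs : RunInvariant N G s f) (hsrc : t.src = Encodable.encode s)
    (hin : ∀ r ∈ t.gIn, d ∈ f r) (hnin : ∀ r ∈ t.gNin, d ∉ f r) :
    ∃ s' : State ι, t.tgt = Encodable.encode s' ∧ RunInvariant N G s' (t.apply f d) := by
  cases ht with
  | enter i =>
    obtain rfl := Encodable.encode_injective hsrc
    obtain ⟨M, hM, hf⟩ := hs
    rw [enterTrans_apply]
    exact ⟨_, rfl, M, hM, hf.partlyFired _⟩
  | op i a l =>
    obtain rfl := Encodable.encode_injective hsrc
    obtain ⟨M, hM, hf⟩ := hs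
    exact ⟨_, rfl, M, hM,
      hf.op (card_live_tokenTrans_le hin hnin) (card_next_tokenTrans_le _ _ _ f d)⟩
  | move i p hp =>
    obtain rfl := Encodable.encode_injective hsrc
    obtain ⟨M, hM, hf⟩ := hs
    exact ⟨_, rfl, M, hM,
      hf.move hp (card_live_tokenTrans_le hin hnin) (card_next_tokenTrans_le _ _ _ f d)⟩
  | leave i =>
    obtain rfl := Encodable.encode_injective hsrc
    obtain ⟨M, hM, hf⟩ := hs
    exact ⟨_, rfl, _, .fire i hM hf.enabled, hf.leave _ _ d⟩

theorem exists_controlReachable_of_reaches [Finite ι] {q : Phase}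
    (h : (simulator N.P G).Reaches (control ι .start, fun _ => ∅) (control ι q, f)) :
    ∃ M, N.ControlReachable G q M := by
  have invariant (c : ℕ × (ℕ → Finset ℕ))
      (hc : (simulator N.P G).Reaches (control ι .start, fun _ => ∅) c) :
      ∃ s : State ι, c.1 = Encodable.encode s ∧ RunInvariant N G s c.2 := by
    induction hc with
    | refl => exact ⟨_, rfl, _, .start, by simp [Bounded, live]⟩
    | tail _ hstep ih =>
      obtain ⟨s, hs, hinv⟩ := ih
      obtain ⟨_, t, ht, hsrc, -, hin, hnin, rfl⟩ := hstep
      exact SimTrans.runInvariant ht hinv (hsrc.trans hs) hin hnin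
  obtain ⟨s, hs, hinv⟩ := invariant _ h
  obtain rfl := Encodable.encode_injective hs
  obtain ⟨M, hM, -⟩ := hinv
  exact ⟨M, hM⟩

end Soundness

/-! ### Runs of the net are runs of the automaton -/

section Completeness

variable {P : Finset ℕ} {f : ℕ → Finset ℕ}

/-- No token counts for two places, and no produced token can be produced again. -/
structure Separated (P : Finset ℕ) (f : ℕ → Finset ℕ) : Prop where
  live_disjoint : (P : Set ℕ).PairwiseDisjoint (live f)
  next_disjoint : (P : Set ℕ).PairwiseDisjoint fun p => f (next p)
  next_subset : ∀ p ∈ P, f (next p) ⊆ f used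

theorem Separated.exists_token {a : TokenOp} (h : Separated P f)
    (ha : ∀ p, a.1 = some p → p ∈ P ∧ (live f p).Nonempty) :
    ∃ d ∉ f used, ∀ p ∈ P, d ∈ live f p ↔ a.1 = some p := by
  obtain ⟨_ | q, b⟩ := a
  · obtain ⟨d, hd⟩ := Infinite.exists_notMem_finset (f used ∪ P.biUnion (live f))
    simp only [Finset.mem_union, Finset.mem_biUnion, not_or, not_exists, not_and] at hd
    exact ⟨d, hd.1, fun p hp => by simp [hd.2 p hp]⟩
  · obtain ⟨hq, d, hd⟩ := ha q rfl
    refine ⟨d, (Finset.mem_sdiff.1 hd).2, fun p hp => ⟨fun hdp => ?_, fun hqp => ?_⟩⟩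
    · rw [h.live_disjoint.elim_finset hq hp d hd hdp]
    · exact Option.some.inj hqp ▸ hd

theorem Separated.tokenTrans_apply {a : TokenOp} {d : ℕ} (h : Separated P f) (hd : d ∉ f used)
    (s s' : ℕ) : Separated P ((tokenTrans s s' a).apply f d) where
  live_disjoint := by
    refine h.live_disjoint.mono fun p => ?_
    rw [live_tokenTrans]
    exact Finset.erase_subset _ _
  next_disjoint p hp q hq hpq := by
    have hdp : d ∉ f (next p) := fun hmem => hd (h.next_subset p hp hmem)
    have hdq : d ∉ f (next q) := fun hmem => hd (h.next_subset q hq hmem)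
    have hdisj : Disjoint (f (next p)) (f (next q)) := h.next_disjoint hp hq hpq
    simp only [Function.onFun, tokenTrans_apply_next]
    split_ifs with hap haq
    · exact absurd (Option.some.inj (hap.symm.trans haq)) hpq
    · exact Finset.disjoint_insert_left.2 ⟨hdq, hdisj⟩
    · exact Finset.disjoint_insert_right.2 ⟨hdp, hdisj⟩
    · exact hdisj
  next_subset p hp := by
    rw [tokenTrans_apply_next, tokenTrans_apply_used]
    split_ifs
    · exact Finset.insert_subset_insert _ (h.next_subset p hp)
    · exact (h.next_subset p hp).trans (Finset.subset_insert _ _)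

theorem Separated.exists_tokenStep {A : RsA Unit} {a : TokenOp} {s s' : ℕ}
    (h : Separated P f) (hA : tokenTrans s s' a ∈ A.Δ)
    (ha : ∀ p, a.1 = some p → p ∈ P ∧ (live f p).Nonempty) :
    ∃ f', A.Reaches (s, f) (s', f') ∧ Separated P f' ∧
      (∀ p ∈ P, (live f p).card = (live f' p).card + if a.1 = some p then 1 else 0) ∧
      ∀ p ∈ P, (f' (next p)).card = (f (next p)).card + if a.2 = some p then 1 else 0 := by
  obtain ⟨d, hd, hlive⟩ := h.exists_token ha
  refine ⟨_, .single ⟨((), d), _, hA, rfl, rfl, fun r hr => ?_, ?_, rfl⟩,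
    h.tokenTrans_apply hd s s', fun p hp => ?_, fun p hp => ?_⟩
  · obtain ⟨p, hp, rfl⟩ : ∃ p, a.1 = some p ∧ current p = r := by
      simpa [tokenTrans] using hr
    exact (Finset.mem_sdiff.1 ((hlive p (ha p hp).1).2 hp)).1
  · simpa [tokenTrans] using hd
  · rw [live_tokenTrans]
    split_ifs with hap
    · exact (Finset.card_erase_add_one ((hlive p hp).2 hap)).symm
    · rw [Finset.erase_eq_of_notMem (mt (hlive p hp).1 hap), add_zero]
  · rw [tokenTrans_apply_next]
    split_ifs
    · exact Finset.card_insert_of_notMem fun hmem => hd (h.next_subset p hp hmem)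
    · rfl

variable [Finite ι] {G : ι → ControlledTrans}

theorem Separated.exists_reaches_ops (i : ι) {l : List TokenOp}
    (hl : l <:+ tokenOps P (G i).toTPNTrans) (h : Separated P f)
    (htakes : ∀ p ∈ P, takes l p ≤ (live f p).card) :
    ∃ f', (simulator P G).Reaches (executing i l, f) (executing i [], f') ∧ Separated P f' ∧
      (∀ p ∈ P, (live f p).card = (live f' p).card + takes l p) ∧
      ∀ p ∈ P, (f' (next p)).card = (f (next p)).card + puts l p := by
  induction l generalizing f with
  | nil => exact ⟨f, .refl, h, by simp [takes], by simp [puts]⟩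
  | cons a l ih =>
    simp only [takes_cons, puts_cons] at htakes ⊢
    have ha (p : ℕ) (hap : a.1 = some p) : p ∈ P ∧ (live f p).Nonempty := by
      have hp : p ∈ P := take_mem_of_mem_tokenOps (hl.subset List.mem_cons_self) hap
      have := htakes p hp
      rw [if_pos hap] at this
      exact ⟨hp, Finset.card_pos.1 (by lia)⟩
    obtain ⟨f₁, hreach₁, hsep₁, hlive₁, hnext₁⟩ :=
      h.exists_tokenStep (A := simulator P G) (.op i a l hl) ha
    obtain ⟨f₂, hreach₂, hsep₂, hlive₂, hnext₂⟩ :=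
      ih ((List.suffix_cons a l).trans hl) hsep₁ fun p hp => by
        linarith [htakes p hp, hlive₁ p hp]
    exact ⟨f₂, hreach₁.trans hreach₂, hsep₂,
      fun p hp => by rw [hlive₁ p hp, hlive₂ p hp, add_assoc],
      fun p hp => by rw [hnext₂ p hp, hnext₁ p hp]; ring⟩

theorem Separated.exists_reaches_moves (i : ι) (h : Separated P f) :
    ∃ f', (simulator P G).Reaches (executing i [], f) (executing i [], f') ∧ Separated P f' ∧
      ∀ p ∈ P, (f' (next p)).card =
        (f (next p)).card + ∑ q ∈ P with (G i).transfer q = p, (live f q).card := by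
  induction hn : ∑ q ∈ P, (live f q).card using Nat.strong_induction_on generalizing f with
  | _ n ih =>
    by_cases hlive : ∃ q ∈ P, (live f q).Nonempty
    · obtain ⟨q, hq, hqlive⟩ := hlive
      obtain ⟨f₁, hreach₁, hsep₁, hlive₁, hnext₁⟩ :=
        h.exists_tokenStep (A := simulator P G) (.move i q hq) fun _ hqp =>
          Option.some.inj hqp ▸ ⟨hq, hqlive⟩
      have hdecrease : ∑ q ∈ P, (live f₁ q).card < ∑ q ∈ P, (live f q).card :=
        Finset.sum_lt_sum (fun p hp => le_of_add_le_left (hlive₁ p hp).ge)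
          ⟨q, hq, by simp [hlive₁ q hq]⟩
      obtain ⟨f₂, hreach₂, hsep₂, hnext₂⟩ := ih _ (hn ▸ hdecrease) hsep₁ rfl
      refine ⟨f₂, hreach₁.trans hreach₂, hsep₂, fun p hp => ?_⟩
      rw [hnext₂ p hp, hnext₁ p hp,
        Finset.sum_congr rfl fun q' hq' => hlive₁ q' (Finset.mem_filter.1 hq').1,
        Finset.sum_add_distrib, sum_filter_take _ hq]
      ring
    · simp only [not_exists, not_and, Finset.not_nonempty_iff_eq_empty] at hlive
      refine ⟨f, .refl, h, fun p _ => ?_⟩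
      rw [Finset.sum_eq_zero fun q hq => by simp [hlive q (Finset.mem_filter.1 hq).1], add_zero]

/-- Between net transitions, the registers hold exactly the tokens of `M`. -/
structure Represents (P : Finset ℕ) (f : ℕ → Finset ℕ) (M : ℕ → ℕ) : Prop where
  separated : Separated P f
  card_live : ∀ p ∈ P, (live f p).card = M p
  next_eq_empty : ∀ p ∈ P, f (next p) = ∅

theorem Separated.represents_leaveTrans {M : ℕ → ℕ} (h : Separated P f)
    (hM : ∀ p ∈ P, (f (next p)).card = M p) (s s' d : ℕ) :
    Represents P ((leaveTrans s s').apply f d) M where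
  separated :=
    { live_disjoint := by simpa only [funext (live_leaveTrans s s' f d)] using h.next_disjoint
      next_disjoint := fun _ _ _ _ _ => by simp [Function.onFun, leaveTrans_apply_next]
      next_subset := by simp [leaveTrans_apply_next] }
  card_live p hp := by rw [live_leaveTrans, hM p hp]
  next_eq_empty p _ := leaveTrans_apply_next s s' f d p

theorem Represents.exists_reaches_fire {N : TPN} {M : ℕ → ℕ} (h : Represents N.P f M) (i : ι)
    (henabled : N.Enabled (G i).toTPNTrans M) :
    ∃ f', (simulator N.P G).Reaches (control ι (G i).src, f) (control ι (G i).tgt, f') ∧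
      Represents N.P f' (N.fire (G i).toTPNTrans M) := by
  have enter : (simulator N.P G).Reaches (control ι (G i).src, f)
      (executing i (tokenOps N.P (G i).toTPNTrans), f) :=
    .single ⟨((), 0), _, .enter i, rfl, rfl, by simp [enterTrans], by simp [enterTrans],
      by rw [enterTrans_apply]; rfl⟩
  obtain ⟨f₁, ops, hsep₁, hlive₁, hnext₁⟩ :=
    h.separated.exists_reaches_ops (G := G) i List.suffix_rfl fun p hp => by
      rw [takes_tokenOps _ hp, h.card_live p hp]
      exact henabled p hp
  obtain ⟨f₂, moves, hsep₂, hnext₂⟩ := hsep₁.exists_reaches_moves (G := G) i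
  have leave : (simulator N.P G).Reaches (executing i [], f₂)
      (control ι (G i).tgt, (leaveTrans _ _).apply f₂ 0) :=
    .single ⟨((), 0), _, .leave i, rfl, rfl, by simp [leaveTrans], by simp [leaveTrans], rfl⟩
  refine ⟨_, ((enter.trans ops).trans moves).trans leave,
    hsep₂.represents_leaveTrans (fun p hp => ?_) _ _ 0⟩
  have hlive (q : ℕ) (hq : q ∈ N.P) : (live f₁ q).card = M q - (G i).inp q := by
    rw [← h.card_live q hq, hlive₁ q hq, takes_tokenOps _ hq, Nat.add_sub_cancel]
  rw [hnext₂ p hp, hnext₁ p hp, h.next_eq_empty p hp, Finset.card_empty, zero_add,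
    puts_tokenOps _ hp, TPN.fire,
    Finset.sum_congr rfl fun q hq => hlive q (Finset.mem_filter.1 hq).1]

theorem exists_reaches_of_controlReachable {N : TPN} {q : Phase} {M : ℕ → ℕ}
    (h : N.ControlReachable G q M) :
    ∃ f, (simulator N.P G).Reaches (control ι .start, fun _ => ∅) (control ι q, f) ∧
      Represents N.P f M := by
  induction h with
  | start =>
    refine ⟨_, .refl, ⟨?_, ?_, ?_⟩, by simp [live], by simp⟩
    all_goals simp [live, Set.PairwiseDisjoint, Set.Pairwise, Function.onFun]
  | fire i _ henabled ih =>
    obtain ⟨f, hreach, hrep⟩ := ih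
    obtain ⟨f', hfire, hrep'⟩ := hrep.exists_reaches_fire i henabled
    exact ⟨f', hreach.trans hfire, hrep'⟩

end Completeness

theorem controlReachable_iff_simulator_lang_ne_empty [Finite ι] (N : TPN)
    (G : ι → ControlledTrans) :
    (∃ M, N.ControlReachable G .accept M) ↔ (simulator N.P G).Lang ≠ ∅ := by
  simp only [RsA.lang_ne_empty_iff, simulator, Finset.mem_singleton, exists_eq_left]
  constructor
  · rintro ⟨M, hM⟩
    obtain ⟨f, hreach, -⟩ := exists_reaches_of_controlReachable hM
    exact ⟨f, hreach⟩
  · rintro ⟨f, hreach⟩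
    exact exists_controlReachable_of_reaches hreach

end RegisterSimulation

instance TPN.instFiniteTrans (N : TPN) : Finite N.T := N.finite_T

noncomputable instance TPN.instEncodableTrans (N : TPN) : Encodable N.T := Encodable.ofCountable N.T

/-- The automaton to whose nonemptiness the coverability of `Mf` in `N` is reduced. -/
noncomputable def coverabilityAutomaton (N : TPN) (Mf : ℕ → ℕ) : RsA Unit :=
  RegisterSimulation.simulator N.P (N.coverTest Mf)

theorem tpn_coverability_to_rsa_emptiness_general (N : TPN) (Mf : ℕ → ℕ) :
    N.Coverable Mf ↔ (coverabilityAutomaton N Mf).Lang ≠ ∅ :=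
  TPN.coverable_iff_controlReachable.trans
    (RegisterSimulation.controlReachable_iff_simulator_lang_ne_empty N (N.coverTest Mf))

/-- For every transfer Petri net `N` whose initial marking puts
a single token in one place and nothing elsewhere, and every marking `Mf`, there is
an RsA `A` over the unary alphabet such that `Mf` is coverable in `N` iff
`L(A) ≠ ∅`. -/
theorem tpn_coverability_to_rsa_emptiness (N : TPN) (Mf : ℕ → ℕ)
    (hM0 : ∃ p₀ ∈ N.P, N.M0 p₀ = 1 ∧ ∀ p ∈ N.P, p ≠ p₀ → N.M0 p = 0) :
    ∃ A : RsA Unit, (N.Coverable Mf ↔ RsA.Lang A ≠ ∅) :=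
  ⟨coverabilityAutomaton N Mf, tpn_coverability_to_rsa_emptiness_general N Mf⟩
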